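/- arXiv:0805.2338 — 2 statements merged into one kernel-verified Lean document; each statement's English description precedes it below -/
import Mathlib

section
/- (Extended Lüroth Theorem) Let K ⊆ F ⊆ K(x₁,…,xₙ) be an intermediate field with transcendence degree of F over K equal to 1. Then there exists a single rational function f ∈ K(x₁,…,xₙ) such that F = K(f). -/
open MvPolynomial

/-- A field extension has transcendence degree one iff some single element forms a
transcendence basis. -/
def TrDegOne (K : Type*) (F : Type*) [Field K] [Field F] [Algebra K F] : Prop :=
  ∃ t : F, IsTranscendenceBasis K (fun _ : Unit => t)

/-!
Let `t = p / q` be a transcendence basis of `F`. Substituting sufficiently general powers of `X`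
for the variables gives a homomorphism `φ : K[xᵢ] → K(X)` with `φ q ≠ 0` and `φ p / φ q` not
constant, hence transcendental. It extends to the localization `R` of `K[xᵢ]` at `ker φ`, which
contains `t`. A nonzero element of `K[t]` has nonzero image in `K(X)`, so it is a unit of the
local ring `R`; thus `K(t) ⊆ R`. Every element of `F` is algebraic over `K(t)`, hence integral
over `R`, hence in `R`, which is integrally closed. So `φ` embeds `F` into `K(X)`, and Lüroth's
theorem in one variable applies to the image.
-/

section Specialization

variable {σ : Type*}

theorem exists_weight_injOn (S : Finset (σ →₀ ℕ)) :
    ∃ w : σ → ℕ, Set.InjOn (Finsupp.weight w) (S : Set (σ →₀ ℕ)) := by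
  classical
  let form : (σ →₀ ℕ) → MvPolynomial σ ℤ := Finsupp.weight X
  have form_injective : Function.Injective form :=
    (linearIndependent_X σ ℤ).restrict_scalars' ℕ
  have eval_form (w : σ → ℕ) (m : σ →₀ ℕ) :
      eval (fun i ↦ (w i : ℤ)) (form m) = Finsupp.weight w m := by
    simp [form, Finsupp.weight_apply, Finsupp.sum]
  by_contra! hS
  -- If no `w` worked, this product would be a nonzero polynomial vanishing on all of `ℕ ^ σ`.
  have prod_ne_zero : ∏ d ∈ S.offDiag, (form d.1 - form d.2) ≠ 0 :=
    Finset.prod_ne_zero_iff.mpr fun d hd ↦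
      sub_ne_zero.mpr (form_injective.ne (Finset.mem_offDiag.mp hd).2.2)
  refine prod_ne_zero (funext_set (fun _ ↦ Set.range Nat.cast)
    (fun _ ↦ Set.infinite_range_of_injective Nat.cast_injective) fun x hx ↦ ?_)
  choose w hw using fun i ↦ hx i trivial
  obtain rfl : (fun i ↦ (w i : ℤ)) = x := funext hw
  obtain ⟨a, ha, b, hb, hab, hne⟩ := by simpa only [Set.InjOn, not_forall] using hS w
  rw [map_zero, map_prod]
  refine Finset.prod_eq_zero (i := (a, b)) (Finset.mem_offDiag.mpr ⟨ha, hb, hne⟩) ?_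
  rw [map_sub, eval_form, eval_form, hab, sub_self]

variable {K : Type*}

theorem coeff_aeval_X_pow_weight [CommSemiring K] {w : σ → ℕ} {p : MvPolynomial σ K}
    (hw : Set.InjOn (Finsupp.weight w) (p.support : Set (σ →₀ ℕ))) {m : σ →₀ ℕ}
    (hm : m ∈ p.support) :
    (aeval (fun i ↦ (Polynomial.X : Polynomial K) ^ w i) p).coeff (Finsupp.weight w m) =
      p.coeff m := by
  have aeval_monomial_eq (a : σ →₀ ℕ) (c : K) :
      aeval (fun i ↦ (Polynomial.X : Polynomial K) ^ w i) (monomial a c) =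
        Polynomial.monomial (Finsupp.weight w a) c := by
    rw [aeval_monomial, ← Polynomial.C_mul_X_pow_eq_monomial, Finsupp.weight_apply, Finsupp.sum,
      ← Finset.prod_pow_eq_pow_sum]
    simp only [Finsupp.prod, ← pow_mul, smul_eq_mul, mul_comm, Polynomial.algebraMap_eq]
  conv_lhs => rw [p.as_sum]
  simp only [map_sum, aeval_monomial_eq, Polynomial.finsetSum_coeff, Polynomial.coeff_monomial]
  rw [Finset.sum_eq_single_of_mem m hm fun a ha hne ↦ if_neg fun h ↦ hne (hw ha hm h), if_pos rfl]

theorem exists_algHom_polynomial_ne_zero_of_support_subset [CommSemiring K]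
    (S : Finset (σ →₀ ℕ)) :
    ∃ φ : MvPolynomial σ K →ₐ[K] Polynomial K, ∀ p, p.support ⊆ S → p ≠ 0 → φ p ≠ 0 := by
  obtain ⟨w, hw⟩ := exists_weight_injOn S
  refine ⟨aeval fun i ↦ Polynomial.X ^ w i, fun p hpS hp hφp ↦ ?_⟩
  obtain ⟨m, hm⟩ := support_nonempty.mpr hp
  refine mem_support_iff.mp hm ?_
  rw [← coeff_aeval_X_pow_weight (hw.mono hpS) hm, hφp, Polynomial.coeff_zero]

variable [Field K]

theorem exists_algHom_ratFunc_transcendental_div {p q : MvPolynomial σ K} (hq : q ≠ 0)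
    (hpq : ∀ c : K, p ≠ C c * q) :
    ∃ φ : MvPolynomial σ K →ₐ[K] RatFunc K, φ q ≠ 0 ∧ Transcendental K (φ p / φ q) := by
  classical
  obtain ⟨φ₀, hφ₀⟩ :=
    exists_algHom_polynomial_ne_zero_of_support_subset (K := K) (p.support ∪ q.support)
  let φ := (IsScalarTower.toAlgHom K (Polynomial K) (RatFunc K)).comp φ₀
  have hφ (r : MvPolynomial σ K) (hr : r.support ⊆ p.support ∪ q.support) (hr0 : r ≠ 0) :
      φ r ≠ 0 := RatFunc.algebraMap_ne_zero (hφ₀ r hr hr0)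
  have hφq : φ q ≠ 0 := hφ q Finset.subset_union_right hq
  refine ⟨φ, hφq, RatFunc.transcendental_of_ne_C _ ?_⟩
  rintro ⟨c, hc⟩
  have support_subset : (p - C c * q).support ⊆ p.support ∪ q.support := by
    rw [← smul_eq_C_mul]
    exact (support_sub σ p _).trans (Finset.union_subset_union_right support_smul)
  refine hφ (p - C c * q) support_subset (sub_ne_zero.mpr (hpq c)) ?_
  rw [div_eq_iff hφq, ← RatFunc.algebraMap_eq_C] at hc
  rw [map_sub, map_mul, hc, ← MvPolynomial.algebraMap_eq, AlgHom.commutes, sub_self]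

theorem exists_specialization_of_transcendental {L : Type*} [Field L] [Algebra K L]
    [Algebra (MvPolynomial σ K) L] [IsScalarTower K (MvPolynomial σ K) L]
    [IsFractionRing (MvPolynomial σ K) L] {t : L} (ht : Transcendental K t) :
    ∃ (p q : MvPolynomial σ K) (φ : MvPolynomial σ K →ₐ[K] RatFunc K),
      algebraMap _ L p / algebraMap _ L q = t ∧ φ q ≠ 0 ∧ Transcendental K (φ p / φ q) := by
  obtain ⟨p, q, hq, rfl⟩ := IsFractionRing.div_surjective (A := MvPolynomial σ K) t
  have hq0 : algebraMap (MvPolynomial σ K) L q ≠ 0 :=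
    IsFractionRing.to_map_ne_zero_of_mem_nonZeroDivisors hq
  have p_ne (c : K) : p ≠ C c * q := by
    rintro rfl
    refine ht ?_
    rw [map_mul, mul_div_cancel_right₀ _ hq0, ← MvPolynomial.algebraMap_eq,
      ← IsScalarTower.algebraMap_apply]
    exact isAlgebraic_algebraMap c
  obtain ⟨φ, hφ⟩ := exists_algHom_ratFunc_transcendental_div (nonZeroDivisors.ne_zero hq) p_ne
  exact ⟨p, q, φ, rfl, hφ⟩

end Specialization

section Embedding

theorem mem_range_algebraMap_of_isAlgebraic {S R L : Type*} [CommRing S] [CommRing R] [CommRing L]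
    [Algebra S R] [Algebra S L] [Algebra R L] [IsScalarTower S R L] [IsIntegrallyClosedIn R L]
    (hS : ∀ s : S, s ≠ 0 → IsUnit (algebraMap S R s)) {x : L} (hx : IsAlgebraic S x) :
    x ∈ (algebraMap R L).range := by
  obtain ⟨s, hs, hsx⟩ := hx.exists_integral_multiple
  obtain ⟨r, hr⟩ := IsIntegrallyClosedIn.isIntegral_iff.mp (hsx.tower_top (A := R))
  obtain ⟨u, hu⟩ := hS s hs
  refine ⟨↑u⁻¹ * r, ?_⟩
  rw [map_mul, hr, ← algebraMap_smul R s x, ← hu, Algebra.smul_def, ← mul_assoc, ← map_mul,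
    Units.inv_mul, map_one, one_mul]

theorem adjoin_singleton_injective_of_transcendental {K A E : Type*} [CommRing K] [CommRing A]
    [CommRing E] [Algebra K A] [Algebra K E] {t : A} (θ : Algebra.adjoin K {t} →ₐ[K] E)
    (ht : Transcendental K (θ ⟨t, Algebra.self_mem_adjoin_singleton K t⟩)) :
    Function.Injective θ := by
  let t' : Algebra.adjoin K {t} := ⟨t, Algebra.self_mem_adjoin_singleton K t⟩
  refine (injective_iff_map_eq_zero θ).mpr fun s hθs ↦ ?_
  obtain ⟨g, hg⟩ := Algebra.adjoin_mem_exists_aeval K t s.2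
  obtain rfl : Polynomial.aeval t' g = s :=
    Subtype.ext ((Subalgebra.aeval_coe _ t' g).symm.trans hg)
  rw [← Polynomial.aeval_algHom_apply] at hθs
  rw [transcendental_iff.mp ht g hθs, map_zero]

variable {K L E : Type*} [Field K] [Field L] [Field E] [Algebra K L] [Algebra K E]

theorem toSubalgebra_le_of_isLocalHom (R : Subalgebra K L) [IsIntegrallyClosedIn R L]
    (ψ : R →ₐ[K] E) [IsLocalHom ψ] (F : IntermediateField K L) {t : F}
    [Algebra.IsAlgebraic (Algebra.adjoin K {t}) F] (htR : (t : L) ∈ R)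
    (ht : Transcendental K (ψ ⟨t, htR⟩)) : F.toSubalgebra ≤ R := by
  have adjoin_le : Algebra.adjoin K {t} ≤ R.comap F.val := Algebra.adjoin_singleton_le htR
  let ι : Algebra.adjoin K {t} →ₐ[K] R :=
    (F.val.comp (Algebra.adjoin K {t}).val).codRestrict R fun s ↦ adjoin_le s.2
  let := ι.toRingHom.toAlgebra
  have : IsScalarTower (Algebra.adjoin K {t}) R L := .of_algebraMap_eq fun _ ↦ rfl
  have comp_injective : Function.Injective (ψ.comp ι) :=
    adjoin_singleton_injective_of_transcendental _ ht
  have isUnit_ι (s : Algebra.adjoin K {t}) (hs : s ≠ 0) : IsUnit (ι s) :=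
    isUnit_of_map_unit ψ _ (IsUnit.mk0 _ ((map_ne_zero_iff (ψ.comp ι) comp_injective).mpr hs))
  intro x hx
  have hx_alg : IsAlgebraic (Algebra.adjoin K {t}) x :=
    (Algebra.IsAlgebraic.isAlgebraic (⟨x, hx⟩ : F)).algebraMap
  obtain ⟨r, rfl⟩ := mem_range_algebraMap_of_isAlgebraic isUnit_ι hx_alg
  exact r.2

variable {A : Type*} [CommRing A] [IsIntegrallyClosed A] [Algebra K A] [Algebra A L]
  [IsScalarTower K A L] [IsFractionRing A L]

theorem exists_isLocalHom_extending (φ : A →ₐ[K] E) :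
    ∃ (R : Subalgebra K L) (ψ : R →ₐ[K] E), IsIntegrallyClosedIn R L ∧ IsLocalHom ψ ∧
      ∀ a, ∃ ha : algebraMap A L a ∈ R, ψ ⟨algebraMap A L a, ha⟩ = φ a := by
  have : IsDomain A := (IsFractionRing.injective A L).isDomain
  have : (RingHom.ker φ).IsPrime := RingHom.ker_isPrime φ
  let M := (RingHom.ker φ).primeCompl
  have hM : M ≤ nonZeroDivisors A := (RingHom.ker φ).primeCompl_le_nonZeroDivisors
  let R := Localization.subalgebra.ofField L M hM
  have : IsScalarTower K A R := .of_algebraMap_eq fun c ↦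
    Subtype.ext (IsScalarTower.algebraMap_apply K A L c)
  have isUnit_φ (s : M) : IsUnit (φ s) := IsUnit.mk0 _ s.2
  let ψ : R →ₐ[K] E := IsLocalization.liftAlgHom isUnit_φ
  have ψ_algebraMap (a : A) : ψ (algebraMap A R a) = φ a := IsLocalization.lift_eq isUnit_φ a
  have isUnit_of_isUnit_map (r : R) (hr : IsUnit (ψ r)) : IsUnit r := by
    obtain ⟨a, s, rfl⟩ := IsLocalization.exists_mk'_eq M r
    refine (IsLocalization.AtPrime.isUnit_mk'_iff R (RingHom.ker φ) a s).mpr fun ha ↦ hr.ne_zero ?_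
    exact (IsLocalization.lift_mk'_spec ..).mpr ((RingHom.mem_ker.mp ha).trans (mul_zero _).symm)
  have : IsIntegrallyClosed R := isIntegrallyClosed_of_isLocalization R M hM
  exact ⟨R.restrictScalars K, ψ, (isIntegrallyClosed_iff_isIntegrallyClosedIn (R := R) L).mp this,
    ⟨isUnit_of_isUnit_map⟩, fun a ↦ ⟨(algebraMap A R a).2, ψ_algebraMap a⟩⟩

theorem nonempty_algHom_of_transcendental_div (φ : A →ₐ[K] E) (F : IntermediateField K L) {t : F}
    [Algebra.IsAlgebraic (Algebra.adjoin K {t}) F] {p q : A}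
    (hpq : algebraMap A L p / algebraMap A L q = t) (hq : φ q ≠ 0)
    (ht : Transcendental K (φ p / φ q)) : Nonempty (F →ₐ[K] E) := by
  obtain ⟨R, ψ, _, _, hψ⟩ := exists_isLocalHom_extending (L := L) φ
  obtain ⟨hpR, hψp⟩ := hψ p
  obtain ⟨hqR, hψq⟩ := hψ q
  obtain ⟨q', hqq'⟩ := (isUnit_of_map_unit ψ _ (hψq ▸ IsUnit.mk0 _ hq)).exists_right_inv
  replace hqq' : algebraMap A L q * q' = 1 := congrArg Subtype.val hqq'
  have htR : (t : L) ∈ R := by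
    rw [← hpq, div_eq_mul_inv, inv_eq_of_mul_eq_one_right hqq']
    exact R.mul_mem hpR q'.2
  have hψt : ψ ⟨t, htR⟩ = φ p / φ q := by
    rw [eq_div_iff hq, ← hψp, ← hψq, ← map_mul]
    refine congrArg ψ (Subtype.ext ?_)
    exact (div_eq_iff (left_ne_zero_of_mul_eq_one hqq')).mp hpq |>.symm
  have hFR : F.toSubalgebra ≤ R := toSubalgebra_le_of_isLocalHom R ψ F htR (hψt ▸ ht)
  exact ⟨ψ.comp (Subalgebra.inclusion hFR)⟩

theorem exists_eq_adjoin_of_algHom_ratFunc (F : IntermediateField K L) (ρ : F →ₐ[K] RatFunc K) :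
    ∃ f : L, F = IntermediateField.adjoin K {f} := by
  obtain ⟨f, hf : ρ f = _⟩ := RatFunc.Luroth.generator_mem (E := ρ.fieldRange)
  have top_eq : (⊤ : IntermediateField K F) = IntermediateField.adjoin K {f} := by
    apply IntermediateField.map_injective ρ
    rw [IntermediateField.adjoin_map, Set.image_singleton, hf,
      ← RatFunc.Luroth.eq_adjoin_generator, AlgHom.fieldRange_eq_map]
  refine ⟨f, ?_⟩
  rw [← IntermediateField.lift_adjoin_simple, ← top_eq, IntermediateField.lift_top]

end Embedding

theorem extended_luroth_general {K σ L : Type*} [Field K] [Field L] [Algebra K L]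
    [Algebra (MvPolynomial σ K) L] [IsScalarTower K (MvPolynomial σ K) L]
    [IsFractionRing (MvPolynomial σ K) L] (F : IntermediateField K L) (hF : TrDegOne K F) :
    ∃ f : L, F = IntermediateField.adjoin K {f} := by
  obtain ⟨t, ht⟩ := hF
  have t_transcendental : Transcendental K (t : L) :=
    (transcendental_algebraMap_iff (algebraMap F L).injective).mpr (ht.1.transcendental ())
  have F_algebraic := ht.isAlgebraic
  rw [Set.range_const] at F_algebraic
  obtain ⟨p, q, φ, hpq, hφq, hφ⟩ :=
    exists_specialization_of_transcendental (σ := σ) t_transcendental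
  obtain ⟨ρ⟩ := nonempty_algHom_of_transcendental_div φ F hpq hφq hφ
  exact exists_eq_adjoin_of_algHom_ratFunc F ρ

/-- Extended Lüroth Theorem: every intermediate field
`K ⊆ F ⊆ K(x₁,…,xₙ)` of transcendence degree 1 over `K` is generated by a single
rational function: `F = K(f)` for some `f ∈ K(x₁,…,xₙ)`. -/
theorem extended_luroth
    {K : Type*} [Field K] {n : ℕ}
    (F : IntermediateField K (FractionRing (MvPolynomial (Fin n) K)))
    (hF : TrDegOne K F) :
    ∃ f : FractionRing (MvPolynomial (Fin n) K),
      F = IntermediateField.adjoin K {f} :=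
  extended_luroth_general (σ := Fin n) F hF
end

section
/- Let f̄ = f̄_n/f̄_d ∈ K(x₁,…,xₙ) in lowest terms with lm(f̄_n) > lm(f̄_d) (for some admissible monomial ordering), f̄_n(0,…,0) = 0 and f̄_d(0,…,0) ≠ 0. Then for every uni-multivariate decomposition f̄ = g(h) there exists an equivalent decomposition f̄ = ḡ(h̄) (i.e. h̄ = l(h) for a degree-1 unit l) such that, writing ḡ = ḡ_n/ḡ_d in lowest terms, deg ḡ_n > deg ḡ_d and ḡ_n(0) = 0. -/
/-!
Work in `L = Frac K[x]`. The monomial order defines a place of `L` at infinity with residue field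
`K`, where `f` has a pole. Hence `f`, and with it `h`, is transcendental, and `h` or `(h - c)⁻¹`,
for `c` the value of `h`, has a pole too; both generate the field `K(h)`. If `h` has a pole, then
the valuation of `g(h)` only depends on the difference of the degrees of `gₙ` and `g_d`, so that
`deg gₙ > deg g_d`. As `f` is regular at the origin, the equation `gₙ(h) = f g_d(h)` now shows that
`h` is integral over the local ring of the origin, which is integrally closed. So `h` has a value at
the origin; subtracting it keeps the pole and yields `gₙ(0) = f(0) g_d(0) = 0`. The change of
generator is a degree-one rational function because it generates the same field.
-/

open MvPolynomial

/-- Substitution of an element `a` of a field extension of `K` into a univariate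
rational function `g ∈ K(t)` (the composition `g ∘ a`). -/
noncomputable def ratEval {K : Type*} [Field K] {L : Type*} [Field L] [Algebra K L]
    (g : RatFunc K) (a : L) : L :=
  Polynomial.aeval a g.num / Polynomial.aeval a g.denom

/-- The multidegree (exponent of the leading monomial) of a multivariate polynomial
with respect to a monomial order, valued in the ordered synonym type. -/
noncomputable def mdeg {σ K : Type*} [CommSemiring K] (m : MonomialOrder σ)
    (p : MvPolynomial σ K) : m.syn :=
  p.support.sup (fun d => m.toSyn d)

open scoped IntermediateField

open WithZero (exp)

section Composition

variable {K L : Type*} [Field K] [Field L] [Algebra K L]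

theorem ratEval_mem_adjoin (g : RatFunc K) (h : L) : ratEval g h ∈ K⟮h⟯ :=
  (IntermediateField.mem_adjoin_simple_iff K _).2 ⟨_, _, rfl⟩

theorem algEquivOfTranscendental_eq_ratEval {h : L} (hh : Transcendental K h) (g : RatFunc K) :
    (RatFunc.algEquivOfTranscendental h hh g : L) = ratEval g h :=
  RatFunc.algEquivOfTranscendental_apply h hh g

theorem exists_eq_ratEval_of_mem_adjoin {f h : L} (hh : Transcendental K h) (hf : f ∈ K⟮h⟯) :
    ∃ g : RatFunc K, f = ratEval g h := by
  refine ⟨(RatFunc.algEquivOfTranscendental h hh).symm ⟨f, hf⟩, ?_⟩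
  rw [← algEquivOfTranscendental_eq_ratEval hh, AlgEquiv.apply_symm_apply]

theorem aeval_denom_ne_zero {h : L} (hh : Transcendental K h) (g : RatFunc K) :
    Polynomial.aeval h g.denom ≠ 0 :=
  fun h0 => g.denom_ne_zero (transcendental_iff.1 hh _ h0)

theorem max_natDegree_eq_one_of_adjoin_ratEval_eq {h : L} (hh : Transcendental K h)
    {l : RatFunc K} (hl : K⟮ratEval l h⟯ = K⟮h⟯) :
    max l.num.natDegree l.denom.natDegree = 1 := by
  let φ : RatFunc K →ₐ[K] L :=
    K⟮h⟯.val.comp (RatFunc.algEquivOfTranscendental h hh : RatFunc K →ₐ[K] K⟮h⟯)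
  have map_adjoin (x : RatFunc K) : K⟮x⟯.map φ = K⟮φ x⟯ := by
    rw [IntermediateField.adjoin_map, Set.image_singleton]
  have adjoin_eq_top : K⟮l⟯ = ⊤ := by
    rw [← RatFunc.adjoin_X]
    apply IntermediateField.map_injective φ
    rw [map_adjoin, map_adjoin]
    convert hl
    · exact algEquivOfTranscendental_eq_ratEval hh l
    · exact RatFunc.algEquivOfTranscendental_X h hh
  rw [← RatFunc.finrank_eq_max_natDegree, adjoin_eq_top, IntermediateField.finrank_top]

theorem transcendental_of_transcendental_mem_adjoin {f h : L} (hf : Transcendental K f)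
    (hfh : f ∈ K⟮h⟯) : Transcendental K h := fun hh =>
  have := IntermediateField.isAlgebraic_adjoin_simple hh.isIntegral
  hf ((Algebra.IsAlgebraic.isAlgebraic (⟨f, hfh⟩ : K⟮h⟯)).algebraMap (A := L))

theorem adjoin_inv (h : L) : K⟮h⁻¹⟯ = K⟮h⟯ := by
  refine le_antisymm ?_ ?_ <;> rw [IntermediateField.adjoin_simple_le_iff]
  · exact inv_mem (IntermediateField.mem_adjoin_simple_self K h)
  · exact inv_mem_iff.1 (IntermediateField.mem_adjoin_simple_self K h⁻¹)

theorem adjoin_sub_algebraMap (h : L) (c : K) : K⟮h - algebraMap K L c⟯ = K⟮h⟯ := by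
  refine le_antisymm ?_ ?_ <;> rw [IntermediateField.adjoin_simple_le_iff]
  · exact sub_mem (IntermediateField.mem_adjoin_simple_self K h) (algebraMap_mem _ c)
  · simpa using add_mem (IntermediateField.mem_adjoin_simple_self K (h - algebraMap K L c))
      (algebraMap_mem _ c)

theorem exists_degree_one_ratEval_of_adjoin_eq {h h' : L} (hh : Transcendental K h)
    (heq : K⟮h'⟯ = K⟮h⟯) :
    ∃ l : RatFunc K, max l.num.natDegree l.denom.natDegree = 1 ∧ h' = ratEval l h := by
  obtain ⟨l, rfl⟩ := exists_eq_ratEval_of_mem_adjoin hh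
    (heq ▸ IntermediateField.mem_adjoin_simple_self K h')
  exact ⟨l, max_natDegree_eq_one_of_adjoin_ratEval_eq hh heq, rfl⟩

end Composition

section PlaceAtInfinity

variable {K L Γ₀ : Type*} [Field K] [Field L] [Algebra K L] [LinearOrderedCommGroupWithZero Γ₀]
  {v : Valuation L Γ₀}

theorem exists_adjoin_eq_one_lt_valuation
    (hres : ∀ x : L, v x ≤ 1 → ∃ c : K, v (x - algebraMap K L c) < 1)
    {h : L} (hh : Transcendental K h) : ∃ h' : L, K⟮h'⟯ = K⟮h⟯ ∧ 1 < v h' := by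
  rcases lt_or_ge 1 (v h) with hv | hv
  · exact ⟨h, rfl, hv⟩
  · obtain ⟨c, hc⟩ := hres h hv
    have sub_ne_zero : h - algebraMap K L c ≠ 0 := fun h0 =>
      hh (sub_eq_zero.1 h0 ▸ isAlgebraic_algebraMap c)
    refine ⟨(h - algebraMap K L c)⁻¹, ?_, ?_⟩
    · rw [adjoin_inv, adjoin_sub_algebraMap]
    · rwa [map_inv₀, one_lt_inv₀ (v.pos_iff.2 sub_ne_zero)]

variable [v.IsTrivialOn K]

theorem transcendental_of_one_lt_valuation {f : L} (hf : 1 < v f) : Transcendental K f :=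
  v.transcendental_of_ne_one K f (v.ne_zero_iff.1 (zero_lt_one.trans hf).ne') hf.ne'

theorem natDegree_denom_lt_natDegree_num {g : RatFunc K} {h : L} (hh : 1 < v h)
    (hg : 1 < v (ratEval g h)) : g.denom.natDegree < g.num.natDegree := by
  have num_ne_zero : g.num ≠ 0 := by
    intro h0
    simp [ratEval, h0] at hg
  rw [ratEval, map_div₀,
    Polynomial.valuation_aeval_eq_valuation_X_pow_natDegree_of_one_lt_valuation_X h hh num_ne_zero,
    Polynomial.valuation_aeval_eq_valuation_X_pow_natDegree_of_one_lt_valuation_X h hh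
      g.denom_ne_zero, one_lt_div₀ (pow_pos (zero_lt_one.trans hh) _)] at hg
  exact (pow_lt_pow_iff_right₀ hh).1 hg

end PlaceAtInfinity

section IntegrallyClosed

variable {K A L : Type*} [Field K] [CommRing A] [Algebra K A] [Field L] [Algebra K L]
  [Algebra A L] [IsScalarTower K A L]

theorem isIntegral_of_ratEval_eq_algebraMap {g : RatFunc K} {h : L} {a : A}
    (hden : Polynomial.aeval h g.denom ≠ 0) (hdeg : g.denom.natDegree < g.num.natDegree)
    (hg : ratEval g h = algebraMap A L a) : IsIntegral A h := by
  have := (algebraMap A L).domain_nontrivial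
  set p : Polynomial A := g.num.map (algebraMap K A)
  set q : Polynomial A := Polynomial.C a * g.denom.map (algebraMap K A)
  have root : Polynomial.aeval h (p - q) = 0 := by
    rw [ratEval, div_eq_iff hden] at hg
    simp [p, q, hg]
  have degree_lt : q.degree < p.degree := by
    refine Polynomial.degree_lt_degree (lt_of_le_of_lt (Polynomial.natDegree_C_mul_le _ _) ?_)
    simpa only [p, Polynomial.natDegree_map] using hdeg
  have leadingCoeff_eq : (p - q).leadingCoeff = algebraMap K A g.num.leadingCoeff := by
    rw [Polynomial.leadingCoeff_sub_of_degree_lt degree_lt, Polynomial.leadingCoeff_map]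
  have leadingCoeff_ne_zero : g.num.leadingCoeff ≠ 0 :=
    Polynomial.leadingCoeff_ne_zero.2 (Polynomial.ne_zero_of_natDegree_gt hdeg)
  have smul_integral := isIntegral_leadingCoeff_smul (p - q) h root
  rw [leadingCoeff_eq, algebraMap_smul] at smul_integral
  simpa only [inv_smul_smul₀ leadingCoeff_ne_zero] using
    smul_integral.smul g.num.leadingCoeff⁻¹

theorem eval_num_eq_of_ratEval_algebraMap (hinj : Function.Injective (algebraMap A L))
    (ε : A →ₐ[K] K) {g : RatFunc K} {a b : A}
    (hden : Polynomial.aeval (algebraMap A L b) g.denom ≠ 0)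
    (hg : ratEval g (algebraMap A L b) = algebraMap A L a) :
    g.num.eval (ε b) = ε a * g.denom.eval (ε b) := by
  have aeval_num : Polynomial.aeval b g.num = a * Polynomial.aeval b g.denom := by
    apply hinj
    rwa [map_mul, ← Polynomial.aeval_algebraMap_apply, ← Polynomial.aeval_algebraMap_apply,
      ← div_eq_iff hden]
  simpa [← Polynomial.aeval_algHom_apply] using congrArg ε aeval_num

end IntegrallyClosed

section Normalization

variable {K A L Γ₀ : Type*} [Field K] [CommRing A] [Algebra K A] [Field L] [Algebra K L]
  [Algebra A L] [IsScalarTower K A L] [IsIntegrallyClosedIn A L]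
  [LinearOrderedCommGroupWithZero Γ₀] {v : Valuation L Γ₀} [v.IsTrivialOn K]

theorem exists_adjoin_algebraMap_eq_one_lt_valuation
    (hres : ∀ x : L, v x ≤ 1 → ∃ c : K, v (x - algebraMap K L c) < 1) (ε : A →ₐ[K] K)
    {a : A} (ha : 1 < v (algebraMap A L a)) {h : L} (hah : algebraMap A L a ∈ K⟮h⟯) :
    ∃ b : A, ε b = 0 ∧ 1 < v (algebraMap A L b) ∧ K⟮algebraMap A L b⟯ = K⟮h⟯ := by
  have hh : Transcendental K h :=
    transcendental_of_transcendental_mem_adjoin (transcendental_of_one_lt_valuation ha) hah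
  obtain ⟨h', adjoin_eq, hv⟩ := exists_adjoin_eq_one_lt_valuation hres hh
  have hh' : Transcendental K h' := transcendental_of_one_lt_valuation hv
  obtain ⟨g, hg⟩ := exists_eq_ratEval_of_mem_adjoin hh' (adjoin_eq ▸ hah)
  have h'_integral : IsIntegral A h' :=
    isIntegral_of_ratEval_eq_algebraMap (aeval_denom_ne_zero hh' g)
      (natDegree_denom_lt_natDegree_num hv (hg ▸ ha)) hg.symm
  obtain ⟨b, rfl⟩ := IsIntegrallyClosedIn.isIntegral_iff.1 h'_integral
  have algebraMap_sub : algebraMap A L (b - algebraMap K A (ε b)) =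
      algebraMap A L b - algebraMap K L (ε b) := by
    rw [map_sub, ← IsScalarTower.algebraMap_apply]
  refine ⟨b - algebraMap K A (ε b), by simp, ?_, ?_⟩
  · have const_lt : v (algebraMap K L (ε b)) < v (algebraMap A L b) :=
      (Valuation.IsTrivialOn.valuation_algebraMap_le_one v _).trans_lt hv
    rwa [algebraMap_sub, Valuation.map_sub_eq_of_lt_left v const_lt]
  · rw [algebraMap_sub, adjoin_sub_algebraMap, adjoin_eq]

theorem exists_degree_one_normalized_decomposition
    (hres : ∀ x : L, v x ≤ 1 → ∃ c : K, v (x - algebraMap K L c) < 1) (ε : A →ₐ[K] K)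
    {a : A} (ha : 1 < v (algebraMap A L a)) (hε : ε a = 0) {h : L}
    (hah : algebraMap A L a ∈ K⟮h⟯) :
    ∃ (l g' : RatFunc K) (h' : L), max l.num.natDegree l.denom.natDegree = 1 ∧
      h' = ratEval l h ∧ algebraMap A L a = ratEval g' h' ∧
      g'.denom.natDegree < g'.num.natDegree ∧ g'.num.coeff 0 = 0 := by
  have hh : Transcendental K h :=
    transcendental_of_transcendental_mem_adjoin (transcendental_of_one_lt_valuation ha) hah
  obtain ⟨b, hεb, hv, adjoin_eq⟩ :=
    exists_adjoin_algebraMap_eq_one_lt_valuation hres ε ha hah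
  have hb : Transcendental K (algebraMap A L b) := transcendental_of_one_lt_valuation hv
  obtain ⟨l, hl, hbl⟩ := exists_degree_one_ratEval_of_adjoin_eq hh adjoin_eq
  obtain ⟨g', hg'⟩ := exists_eq_ratEval_of_mem_adjoin hb (adjoin_eq ▸ hah)
  refine ⟨l, g', algebraMap A L b, hl, hbl, hg',
    natDegree_denom_lt_natDegree_num hv (hg' ▸ ha), ?_⟩
  have eval_num := eval_num_eq_of_ratEval_algebraMap
    (IsIntegralClosure.algebraMap_injective A A L) ε (aeval_denom_ne_zero hb g') hg'.symm
  rwa [hεb, hε, zero_mul, ← Polynomial.coeff_zero_eq_eval_zero] at eval_num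

end Normalization

section DegreeValuation

theorem mdeg_eq_toSyn_degree {σ R : Type*} [CommSemiring R] (m : MonomialOrder σ)
    (p : MvPolynomial σ R) : mdeg m p = m.toSyn (m.degree p) := by
  simp [mdeg, MonomialOrder.degree]

variable {σ : Type*} (R : Type*) [CommRing R] [IsDomain R] (m : MonomialOrder σ)

open scoped Classical in
/-- The valuation of `R[x]` at infinity attached to a monomial order `m`: the `m`-degree, in
multiplicative notation. The degrees are embedded in their Grothendieck group so that the valuation
extends to `Frac R[x]`. -/
noncomputable def degreeValuation :
    Valuation (MvPolynomial σ R)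
      (WithZero (Multiplicative (Algebra.GrothendieckAddGroup m.syn))) where
  toFun p := if p = 0 then 0 else exp (AddLocalization.mk (m.toSyn (m.degree p)) 0)
  map_zero' := if_pos rfl
  map_one' := by simp [AddLocalization.mk_zero]
  map_mul' p q := by
    by_cases hp : p = 0
    · simp [hp]
    by_cases hq : q = 0
    · simp [hq]
    simp [hp, hq, m.degree_mul, ← WithZero.exp_add, AddLocalization.mk_add]
  map_add_le_max' p q := by
    by_cases hp : p = 0
    · simp [hp]
    by_cases hq : q = 0
    · simp [hq]
    by_cases hpq : p + q = 0
    · simp [hpq]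
    simpa [hp, hq, hpq, AddLocalization.mk_le_mk] using m.degree_add_le

variable {R}

theorem degreeValuation_eq_zero_iff {p : MvPolynomial σ R} :
    degreeValuation R m p = 0 ↔ p = 0 := by
  simp [degreeValuation]

theorem degreeValuation_C {c : R} (hc : c ≠ 0) : degreeValuation R m (C c) = 1 := by
  simp [degreeValuation, hc, AddLocalization.mk_zero]

theorem degreeValuation_le_iff {p q : MvPolynomial σ R} (hp : p ≠ 0) (hq : q ≠ 0) :
    degreeValuation R m p ≤ degreeValuation R m q ↔
      m.toSyn (m.degree p) ≤ m.toSyn (m.degree q) := by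
  simp [degreeValuation, hp, hq, AddLocalization.mk_le_mk]

theorem degreeValuation_C_le_one {c : R} : degreeValuation R m (C c) ≤ 1 := by
  rcases eq_or_ne c 0 with rfl | hc
  · simp
  · exact (degreeValuation_C m hc).le

theorem degreeValuation_lt_of_mdeg_lt {p q : MvPolynomial σ R} (h : mdeg m p < mdeg m q) :
    degreeValuation R m p < degreeValuation R m q := by
  have hq : q ≠ 0 := by
    rintro rfl
    exact not_lt_bot (by simpa only [mdeg, support_zero, Finset.sup_empty] using h)
  rw [mdeg_eq_toSyn_degree, mdeg_eq_toSyn_degree] at h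
  rcases eq_or_ne p 0 with rfl | hp
  · rwa [map_zero, zero_lt_iff, ne_eq, degreeValuation_eq_zero_iff]
  · exact lt_of_not_ge fun hle => h.not_ge ((degreeValuation_le_iff m hq hp).1 hle)

theorem exists_degreeValuation_sub_C_mul_lt {K : Type*} [Field K] {p q : MvPolynomial σ K}
    (hq : q ≠ 0) (hpq : degreeValuation K m p ≤ degreeValuation K m q) :
    ∃ c : K, degreeValuation K m (p - C c * q) < degreeValuation K m q := by
  set c := coeff (m.degree q) p / m.leadingCoeff q
  set r := p - C c * q
  have coeff_eq_zero : coeff (m.degree q) r = 0 := by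
    rw [coeff_sub, coeff_C_mul, sub_eq_zero]
    exact (div_mul_cancel₀ _ (m.coeff_degree_ne_zero_iff.2 hq)).symm
  refine ⟨c, lt_of_le_of_ne ?_ fun heq => ?_⟩
  · refine (Valuation.map_sub _ _ _).trans (max_le hpq ?_)
    rw [map_mul]
    exact mul_le_of_le_one_left' (degreeValuation_C_le_one m)
  · have hr : r ≠ 0 := by
      rwa [ne_eq, ← degreeValuation_eq_zero_iff m, heq, degreeValuation_eq_zero_iff]
    have degree_eq : m.degree r = m.degree q := m.toSyn.injective <|
      le_antisymm ((degreeValuation_le_iff m hr hq).1 heq.le)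
        ((degreeValuation_le_iff m hq hr).1 heq.ge)
    exact m.coeff_degree_ne_zero_iff.2 hr (degree_eq ▸ coeff_eq_zero)

end DegreeValuation

section FractionField

variable {σ : Type*} (R : Type*) [CommRing R] [IsDomain R] (m : MonomialOrder σ)

/-- The extension of `degreeValuation` to `Frac R[x]`: a rational function has a pole at infinity
when its valuation exceeds `1`. -/
noncomputable def fractionDegreeValuation :
    Valuation (FractionRing (MvPolynomial σ R))
      (WithZero (Multiplicative (Algebra.GrothendieckAddGroup m.syn))) :=
  (degreeValuation R m).extendToLocalization (S := nonZeroDivisors _)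
    (fun _ hp => by
      simpa [Ideal.primeCompl, degreeValuation_eq_zero_iff] using nonZeroDivisors.ne_zero hp)
    _

variable {R}

theorem fractionDegreeValuation_algebraMap (p : MvPolynomial σ R) :
    fractionDegreeValuation R m (algebraMap _ _ p) = degreeValuation R m p :=
  Valuation.extendToLocalization_apply_map_apply _ _ _ _

theorem one_lt_fractionDegreeValuation_div {p q : MvPolynomial σ R} (hq : q ≠ 0)
    (h : mdeg m q < mdeg m p) :
    1 < fractionDegreeValuation R m (algebraMap _ _ p / algebraMap _ _ q) := by
  rw [map_div₀, fractionDegreeValuation_algebraMap, fractionDegreeValuation_algebraMap,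
    one_lt_div₀ (zero_lt_iff.2 ((degreeValuation_eq_zero_iff m).not.2 hq))]
  exact degreeValuation_lt_of_mdeg_lt m h

variable {K : Type*} [Field K]

instance : (fractionDegreeValuation K m).IsTrivialOn K where
  eq_one c hc := by
    rw [IsScalarTower.algebraMap_apply K (MvPolynomial σ K), fractionDegreeValuation_algebraMap]
    exact degreeValuation_C m hc

theorem exists_fractionDegreeValuation_sub_algebraMap_lt_one
    (x : FractionRing (MvPolynomial σ K)) (hx : fractionDegreeValuation K m x ≤ 1) :
    ∃ c : K, fractionDegreeValuation K m (x - algebraMap K _ c) < 1 := by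
  obtain ⟨p, q, hq, rfl⟩ := IsFractionRing.div_surjective (A := MvPolynomial σ K) x
  have hq := nonZeroDivisors.ne_zero hq
  have vq_pos : 0 < degreeValuation K m q :=
    zero_lt_iff.2 ((degreeValuation_eq_zero_iff m).not.2 hq)
  rw [map_div₀, fractionDegreeValuation_algebraMap, fractionDegreeValuation_algebraMap,
    div_le_one₀ vq_pos] at hx
  obtain ⟨c, hc⟩ := exists_degreeValuation_sub_C_mul_lt m hq hx
  have sub_eq : algebraMap (MvPolynomial σ K) (FractionRing (MvPolynomial σ K)) p /
      algebraMap _ _ q - algebraMap K _ c =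
      algebraMap _ _ (p - C c * q) / algebraMap _ _ q := by
    have algebraMap_ne_zero :
        algebraMap (MvPolynomial σ K) (FractionRing (MvPolynomial σ K)) q ≠ 0 := by
      simpa using hq
    rw [map_sub, map_mul, sub_div, mul_div_cancel_right₀ _ algebraMap_ne_zero,
      IsScalarTower.algebraMap_apply K (MvPolynomial σ K), algebraMap_eq]
  exact ⟨c, by rwa [sub_eq, map_div₀, fractionDegreeValuation_algebraMap,
    fractionDegreeValuation_algebraMap, div_lt_one₀ vq_pos]⟩

end FractionField

section LocalRing

variable {σ K : Type*} [Field K] (c : σ → K)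

/-- The maximal ideal of the point `c` of affine space. -/
noncomputable abbrev pointIdeal : Ideal (MvPolynomial σ K) := RingHom.ker (aeval c)

instance : (pointIdeal c).IsPrime := RingHom.ker_isPrime _

/-- The local ring of affine space at the point `c`: the rational functions regular at `c`. -/
abbrev LocalRingAt : Type _ := Localization.AtPrime (pointIdeal c)

instance : IsScalarTower K (LocalRingAt c) (FractionRing (MvPolynomial σ K)) :=
  IsScalarTower.to₁₃₄ K (MvPolynomial σ K) _ _

instance : IsIntegrallyClosedIn (LocalRingAt c) (FractionRing (MvPolynomial σ K)) :=
  have := isIntegrallyClosed_of_isLocalization (LocalRingAt c) (pointIdeal c).primeCompl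
    (Ideal.primeCompl_le_nonZeroDivisors _)
  (isIntegrallyClosed_iff_isIntegrallyClosedIn _).1 this

/-- The value at `c` of a rational function regular at `c`. -/
noncomputable def evalAt : LocalRingAt c →ₐ[K] K :=
  IsLocalization.liftAlgHom (M := (pointIdeal c).primeCompl) (f := aeval c)
    fun p => IsUnit.mk0 _ p.2

variable {c}

theorem exists_algebraMap_eq_div_evalAt_eq_zero {p q : MvPolynomial σ K} (hp : eval c p = 0)
    (hq : eval c q ≠ 0) :
    ∃ a : LocalRingAt c, algebraMap _ (FractionRing (MvPolynomial σ K)) a =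
      algebraMap _ _ p / algebraMap _ _ q ∧ evalAt c a = 0 := by
  have q_ne_zero : algebraMap (MvPolynomial σ K) (FractionRing (MvPolynomial σ K)) q ≠ 0 := by
    rw [ne_eq, FaithfulSMul.algebraMap_eq_zero_iff]
    rintro rfl
    exact hq (map_zero _)
  let q' : (pointIdeal c).primeCompl := ⟨q, hq⟩
  refine ⟨IsLocalization.mk' _ p q', ?_, ?_⟩
  · rw [eq_div_iff q_ne_zero, IsScalarTower.algebraMap_apply _ (LocalRingAt c) _ q,
      IsScalarTower.algebraMap_apply _ (LocalRingAt c) _ p, ← map_mul,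
      IsLocalization.mk'_spec (LocalRingAt c) p q']
  · rw [evalAt, IsLocalization.liftAlgHom_apply, IsLocalization.lift_mk'_spec, mul_zero]
    exact hp

end LocalRing

theorem normalized_equivalent_decomposition_general {σ K : Type*} [Field K] (m : MonomialOrder σ)
    (Fn Fd : MvPolynomial σ K) (hlm : mdeg m Fd < mdeg m Fn)
    (h0n : eval (0 : σ → K) Fn = 0) (h0d : eval (0 : σ → K) Fd ≠ 0)
    (g : RatFunc K) (h : FractionRing (MvPolynomial σ K))
    (hdec : algebraMap (MvPolynomial σ K) (FractionRing (MvPolynomial σ K)) Fn /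
      algebraMap (MvPolynomial σ K) (FractionRing (MvPolynomial σ K)) Fd = ratEval g h) :
    ∃ (l gbar : RatFunc K) (hbar : FractionRing (MvPolynomial σ K)),
      max l.num.natDegree l.denom.natDegree = 1 ∧
      hbar = ratEval l h ∧
      algebraMap (MvPolynomial σ K) (FractionRing (MvPolynomial σ K)) Fn /
        algebraMap (MvPolynomial σ K) (FractionRing (MvPolynomial σ K)) Fd =
        ratEval gbar hbar ∧
      gbar.denom.natDegree < gbar.num.natDegree ∧
      gbar.num.coeff 0 = 0 := by
  have hFd : Fd ≠ 0 := by
    rintro rfl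
    exact h0d (map_zero _)
  have one_lt := one_lt_fractionDegreeValuation_div m hFd hlm
  obtain ⟨a, ha, hεa⟩ := exists_algebraMap_eq_div_evalAt_eq_zero h0n h0d
  rw [← ha] at hdec one_lt ⊢
  have mem_adjoin : algebraMap _ _ a ∈ K⟮h⟯ := hdec ▸ ratEval_mem_adjoin g h
  exact exists_degree_one_normalized_decomposition (v := fractionDegreeValuation K m)
    (exists_fractionDegreeValuation_sub_algebraMap_lt_one m) (evalAt 0) one_lt hεa mem_adjoin

/-- Suppose `f̄ = Fn/Fd` is in lowest terms with `lm Fn > lm Fd`,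
`Fn(0,…,0) = 0` and `Fd(0,…,0) ≠ 0`. Then every uni-multivariate decomposition
`f̄ = g(h)` has an equivalent decomposition `f̄ = ḡ(h̄)` (with `h̄ = l(h)` for a
degree-1 unit `l`) such that `deg ḡ_n > deg ḡ_d` and `ḡ_n(0) = 0`. -/
theorem normalized_equivalent_decomposition
    {K : Type*} [Field K] {n : ℕ} (m : MonomialOrder (Fin n))
    (Fn Fd : MvPolynomial (Fin n) K) (hFd : Fd ≠ 0)
    (hcop : ∀ d : MvPolynomial (Fin n) K, d ∣ Fn → d ∣ Fd → IsUnit d)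
    (hlm : mdeg m Fd < mdeg m Fn)
    (h0n : eval (0 : Fin n → K) Fn = 0) (h0d : eval (0 : Fin n → K) Fd ≠ 0)
    (g : RatFunc K) (h : FractionRing (MvPolynomial (Fin n) K))
    (hdec :
      (algebraMap (MvPolynomial (Fin n) K) (FractionRing (MvPolynomial (Fin n) K)) Fn) /
        (algebraMap (MvPolynomial (Fin n) K) (FractionRing (MvPolynomial (Fin n) K)) Fd) =
      ratEval g h) :
    ∃ (l gbar : RatFunc K) (hbar : FractionRing (MvPolynomial (Fin n) K)),
      max l.num.natDegree l.denom.natDegree = 1 ∧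
      hbar = ratEval l h ∧
      (algebraMap (MvPolynomial (Fin n) K) (FractionRing (MvPolynomial (Fin n) K)) Fn) /
        (algebraMap (MvPolynomial (Fin n) K) (FractionRing (MvPolynomial (Fin n) K)) Fd) =
        ratEval gbar hbar ∧
      gbar.denom.natDegree < gbar.num.natDegree ∧
      gbar.num.coeff 0 = 0 :=
  normalized_equivalent_decomposition_general m Fn Fd hlm h0n h0d g h hdec
end
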